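/- For integers q, k ≥ 1, the winning probability of the greedy strategy in the full game on the deck with q cards of value 1, k cards of value 2, and 1 card of value 3 equals 1/(q+1) + 1/(k+1) - 1/(q+k+1). -/

import Mathlib

/-- The deck of composition `s` as a list of card values:
`s[i]` copies of value `i+1`, in a canonical order. -/
def deckList (s : List ℕ) : List ℕ :=
  (List.range s.length).flatMap fun i => List.replicate (s.getD i 0) (i + 1)

/-- `winsAux strat hist m d = true` iff the player using adaptive strategy `strat`
(a function from the list of previously revealed cards to the next bid)
survives `m` rounds when the remaining deck order is `d`, having already seen `hist`. -/
def winsAux (strat : List ℕ → ℕ) : List ℕ → ℕ → List ℕ → Bool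
  | _, 0, _ => true
  | _, _ + 1, [] => true
  | hist, m + 1, c :: rest =>
      (strat hist != c) && winsAux strat (hist ++ [c]) m rest

/-- Probability that strategy `strat` wins the `m`-round game against the uniformly
shuffled `s`-deck: the fraction of the `c!` orderings of the deck on which it wins. -/
def winProb (strat : List ℕ → ℕ) (s : List ℕ) (m : ℕ) : ℚ :=
  (((deckList s).permutations.countP fun d => winsAux strat [] m d) : ℚ)
    / ((deckList s).length.factorial : ℚ)

/-- Number of cards of value `i` remaining from the `s`-deck after the cards in `hist`
have been dealt. -/
def remCount (s : List ℕ) (hist : List ℕ) (i : ℕ) : ℕ :=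
  s.getD (i - 1) 0 - hist.count i

/-- The canonical greedy strategy for the `s`-deck: name a least frequent remaining value. -/
def greedyStrat (s : List ℕ) (hist : List ℕ) : ℕ :=
  (((List.range' 1 s.length)).argmin (remCount s hist)).getD 1

/-- `g m s`: the probability that the greedy strategy wins the `m`-round `s`-game. -/
def g (m : ℕ) (s : List ℕ) : ℚ :=
  winProb (greedyStrat s) s m

/-- `gFull s`: greedy winning probability when all cards are dealt. -/
def gFull (s : List ℕ) : ℚ :=
  g (deckList s).length s

/-- The strategy naming, in order, value `1` `b 1` times, value `2` `b 2` times, etc. -/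
def bidStrat (b : List ℕ) (hist : List ℕ) : ℕ :=
  (deckList b).getD hist.length 0

/-- `advProb b s`: winning probability of the advance bid vector `b` against the `s`-deck. -/
def advProb (b s : List ℕ) : ℚ :=
  winProb (bidStrat b) s b.sum

/-- `s` majorizes `q`: every partial sum of `s` is at least that of `q`. -/
def Majorizes (s q : List ℕ) : Prop :=
  ∀ i, (q.take i).sum ≤ (s.take i).sum

/-- `Pfun s q = ∏_{i : sᵢ > qᵢ} sᵢ (sᵢ-1) ⋯ (qᵢ+1) = ∏_{i : sᵢ > qᵢ} sᵢ!/qᵢ!`. -/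
def Pfun (s q : List ℕ) : ℕ :=
  (List.zipWith (fun a b => if b < a then a.factorial / b.factorial else 1) s q).prod

/-- `s` with its `i`-th entry decreased by `1`, re-sorted non-increasingly. -/
def downAt (s : List ℕ) (i : ℕ) : List ℕ :=
  ((s.set i (s.getD i 0 - 1)).mergeSort fun a b => decide (b ≤ a))

/-- `strat` plays greedily at position `hist`. -/
def GreedyAt (s : List ℕ) (strat : List ℕ → ℕ) (hist : List ℕ) : Prop :=
  strat hist ∈ List.range' 1 s.length ∧
    ∀ j ∈ List.range' 1 s.length, remCount s hist (strat hist) ≤ remCount s hist j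

/-- `strat` plays anti-greedily at `hist`: it names a most frequent remaining value. -/
def AntiGreedyAt (s : List ℕ) (strat : List ℕ → ℕ) (hist : List ℕ) : Prop :=
  strat hist ∈ List.range' 1 s.length ∧
    ∀ j ∈ List.range' 1 s.length, remCount s hist j ≤ remCount s hist (strat hist)

/-- `hist` is a position reachable with positive probability by `strat` in the `m`-round
`s`-game: it is part of the deck, fewer than `m` cards have been dealt, and `strat`
survived all rounds so far. -/
def Reachable (strat : List ℕ → ℕ) (s : List ℕ) (m : ℕ) (hist : List ℕ) : Prop :=
  hist.length < m ∧ List.Subperm hist (deckList s) ∧ winsAux strat [] hist.length hist = true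

/-- Binomial coefficient with integer lower index (zero when the lower index is negative). -/
def zchoose (n : ℕ) (k : ℤ) : ℕ :=
  if 0 ≤ k then n.choose k.toNat else 0

/-- Sum of `F` over all orderings of `l`. -/
def permSum (l : List ℕ) (F : List ℕ → ℚ) : ℚ := ((List.permutations' l).map F).sum

theorem permSum_perm {l l' : List ℕ} (h : l.Perm l') (F : List ℕ → ℚ) :
    permSum l F = permSum l' F := by
  unfold permSum
  exact ((List.Perm.permutations' h).map F).sum_eq

theorem sum_map_flatMap (L : List (List ℕ)) (f : List ℕ → List (List ℕ)) (F : List ℕ → ℚ) :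
    ((L.flatMap f).map F).sum = (L.map fun d => ((f d).map F).sum).sum := by
  induction L with
  | nil => simp
  | cons x xs ih => simp [ih]

theorem permSum_cons (a : ℕ) (l : List ℕ) (F : List ℕ → ℚ) :
    permSum (a :: l) F = permSum l (fun d => ((List.permutations'Aux a d).map F).sum) := by
  unfold permSum
  rw [List.permutations', sum_map_flatMap]

theorem permSum_add (l : List ℕ) (F G : List ℕ → ℚ) :
    permSum l (fun d => F d + G d) = permSum l F + permSum l G := by
  unfold permSum
  rw [List.sum_map_add]

theorem permSum_zero (l : List ℕ) : permSum l (fun _ => 0) = 0 := by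
  simp [permSum]

theorem permSum_first (l : List ℕ) (hl : l ≠ []) (F : List ℕ → ℚ) :
    permSum l F = (l.map fun x => permSum (l.erase x) (fun d => F (x :: d))).sum := by
  induction l generalizing F with
  | nil => exact absurd rfl hl
  | cons a l ih =>
    rw [permSum_cons]
    by_cases h : l = []
    · subst h
      simp [permSum]
    · have e : (fun d => ((List.permutations'Aux a d).map F).sum) =
        fun d => F (a :: d) + (match d with
          | [] => 0
          | y :: ys => ((List.permutations'Aux a ys).map (fun d => F (y :: d))).sum) := by
        funext d
        cases d with
        | nil => simp
        | cons y ys => simp [Function.comp_def]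
      rw [e, permSum_add, List.map_cons, List.sum_cons, List.erase_cons_head]
      congr 1
      rw [ih h]
      congr 1
      apply List.map_congr_left
      intro x hx
      have hp : ((a :: l).erase x).Perm (a :: l.erase x) := by
        by_cases hxa : a = x
        · subst hxa
          rw [List.erase_cons_head]
          exact List.perm_cons_erase hx
        · rw [List.erase_cons_tail (by simpa using hxa)]
      rw [permSum_perm hp, permSum_cons]

/-- The remaining deck. -/
def dk (a b c : ℕ) : List ℕ :=
  List.replicate a 1 ++ (List.replicate b 2 ++ List.replicate c 3)

theorem dk_erase1 (a b c : ℕ) : (dk (a + 1) b c).erase 1 = dk a b c := by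
  simp [dk, List.replicate_succ]

theorem dk_erase2 (a b c : ℕ) : ((dk a (b + 1) c).erase 2).Perm (dk a b c) := by
  rw [List.perm_iff_count]
  intro x
  simp only [dk, List.count_erase, List.count_append, List.count_replicate]
  by_cases h : x = 2
  · subst h; simp
  · have : ¬ (2 = x) := fun e => h e.symm
    simp [this]

theorem dk_erase3 (a b c : ℕ) : ((dk a b (c + 1)).erase 3).Perm (dk a b c) := by
  rw [List.perm_iff_count]
  intro x
  simp only [dk, List.count_erase, List.count_append, List.count_replicate]
  by_cases h : x = 3
  · subst h; simp
  · have : ¬ (3 = x) := fun e => h e.symm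
    simp [this]

theorem dk_sum (a b c : ℕ) (G : ℕ → ℚ) :
    ((dk a b c).map G).sum = a * G 1 + b * G 2 + c * G 3 := by
  simp [dk]; ring

/-- The winning probability from a position. -/
def fv (a b c : ℕ) : ℚ :=
  if c = 0 then 1 else 1 / ((a : ℚ) + 1) + 1 / ((b : ℚ) + 1) - 1 / ((a : ℚ) + b + 1)

theorem fv_zero_left (b c : ℕ) : fv 0 b c = 1 := by
  unfold fv; split_ifs <;> simp

theorem fv_zero_mid (a c : ℕ) : fv a 0 c = 1 := by
  unfold fv; split_ifs <;> simp

theorem fv_zero_right (a b : ℕ) : fv a b 0 = 1 := by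
  simp [fv]

theorem fv_rec (a b : ℕ) : ((a : ℚ) + 1) * fv a (b + 1) 1 + ((b : ℚ) + 1) * fv (a + 1) b 1
    = ((a : ℚ) + b + 3) * fv (a + 1) (b + 1) 1 := by
  simp only [fv]
  push_cast
  have h1 : (a : ℚ) + 1 ≠ 0 := by positivity
  have h2 : (b : ℚ) + 1 ≠ 0 := by positivity
  have h3 : (a : ℚ) + 1 + 1 ≠ 0 := by positivity
  have h4 : (b : ℚ) + 1 + 1 ≠ 0 := by positivity
  have h5 : (a : ℚ) + (b + 1) + 1 ≠ 0 := by positivity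
  have h6 : (a : ℚ) + 1 + b + 1 ≠ 0 := by positivity
  have h7 : (a : ℚ) + 1 + (b + 1) + 1 ≠ 0 := by positivity
  field_simp
  ring

theorem greedy_spec (q k : ℕ) (hist : List ℕ) :
    greedyStrat [q, k, 1] hist ∈ [1, 2, 3] ∧
    ∀ j ∈ [1, 2, 3], remCount [q, k, 1] hist (greedyStrat [q, k, 1] hist)
      ≤ remCount [q, k, 1] hist j := by
  have hr : List.range' 1 ([q, k, 1] : List ℕ).length = [1, 2, 3] := by
    simp [List.range'_succ]
  unfold greedyStrat
  rw [hr]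
  cases h : List.argmin (remCount [q, k, 1] hist) [1, 2, 3] with
  | none => simp [List.argmin_eq_none] at h
  | some m =>
    refine ⟨List.argmin_mem h, fun j hj => ?_⟩
    exact List.le_of_mem_argmin hj h

theorem key (q k n : ℕ) : ∀ (a b c : ℕ) (hist : List ℕ), a + b + c = n → c ≤ 1 →
    hist.count 1 + a = q → hist.count 2 + b = k → hist.count 3 + c = 1 →
    permSum (dk a b c)
      (fun d => if winsAux (greedyStrat [q, k, 1]) hist n d = true then 1 else 0)
      = (n.factorial : ℚ) * fv a b c := by
  induction n with
  | zero =>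
    intro a b c hist hn _ _ _ _
    obtain rfl : a = 0 := by omega
    obtain rfl : b = 0 := by omega
    obtain rfl : c = 0 := by omega
    simp [permSum, dk, winsAux, fv]
  | succ n ih =>
    intro a b c hist hn hc h1 h2 h3
    obtain ⟨hm, hmin⟩ := greedy_spec q k hist
    have r1 : remCount [q, k, 1] hist 1 = a := by simp [remCount]; omega
    have r2 : remCount [q, k, 1] hist 2 = b := by simp [remCount]; omega
    have r3 : remCount [q, k, 1] hist 3 = c := by simp [remCount]; omega
    have hne : dk a b c ≠ [] := by
      intro h
      have := congrArg List.length h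
      simp [dk] at this
      omega
    rw [permSum_first _ hne, dk_sum]
    set st := greedyStrat [q, k, 1] hist with hst
    have step : ∀ (x : ℕ) (l : List ℕ) (v : ℚ),
        permSum l (fun d => if winsAux (greedyStrat [q, k, 1]) (hist ++ [x]) n d = true
          then 1 else 0) = v →
        permSum l (fun d => if winsAux (greedyStrat [q, k, 1]) hist (n + 1) (x :: d) = true
          then 1 else 0) = if st = x then 0 else v := by
      intro x l v hv
      by_cases hx : st = x
      · simp only [winsAux, ← hst, hx]
        simp [permSum_zero]
      · rw [if_neg hx, ← hv]
        simp [winsAux, ← hst, hx]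
    have T1 : (a : ℚ) * permSum ((dk a b c).erase 1) (fun d =>
        if winsAux (greedyStrat [q, k, 1]) hist (n + 1) (1 :: d) = true then 1 else 0)
        = a * (if st = 1 then 0 else (n.factorial : ℚ) * fv (a - 1) b c) := by
      cases a with
      | zero => simp
      | succ a =>
        rw [dk_erase1, step _ _ _ (ih a b c (hist ++ [1]) (by omega) hc
          (by simp; omega) (by simp; omega) (by simp; omega))]
        simp
    have T2 : (b : ℚ) * permSum ((dk a b c).erase 2) (fun d =>
        if winsAux (greedyStrat [q, k, 1]) hist (n + 1) (2 :: d) = true then 1 else 0)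
        = b * (if st = 2 then 0 else (n.factorial : ℚ) * fv a (b - 1) c) := by
      cases b with
      | zero => simp
      | succ b =>
        rw [permSum_perm (dk_erase2 a b c), step _ _ _ (ih a b c (hist ++ [2]) (by omega) hc
          (by simp; omega) (by simp; omega) (by simp; omega))]
        simp
    have T3 : (c : ℚ) * permSum ((dk a b c).erase 3) (fun d =>
        if winsAux (greedyStrat [q, k, 1]) hist (n + 1) (3 :: d) = true then 1 else 0)
        = c * (if st = 3 then 0 else (n.factorial : ℚ) * fv a b (c - 1)) := by
      cases c with
      | zero => simp
      | succ c =>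
        rw [permSum_perm (dk_erase3 a b c), step _ _ _ (ih a b c (hist ++ [3]) (by omega)
          (by omega) (by simp; omega) (by simp; omega) (by simp; omega))]
        simp
    rw [T1, T2, T3]
    have m1 := hmin 1 (by simp)
    have m2 := hmin 2 (by simp)
    have m3 := hmin 3 (by simp)
    rw [r1] at m1
    rw [r2] at m2
    rw [r3] at m3
    have hnq : (n : ℚ) + 1 = a + b + c := by exact_mod_cast hn.symm
    have hfac : ((n + 1).factorial : ℚ) = (a + b + c) * n.factorial := by
      rw [Nat.factorial_succ]; push_cast; rw [hnq]
    rw [hfac]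
    clear_value st
    clear T1 T2 T3 step hst ih hne
    have hst : st = 1 ∨ st = 2 ∨ st = 3 := by simpa using hm
    obtain rfl | rfl : c = 0 ∨ c = 1 := by omega
    · simp only [fv_zero_right]
      rcases hst with rfl | rfl | rfl
      · obtain rfl : a = 0 := by omega
        simp
      · obtain rfl : b = 0 := by omega
        simp
      · simp; ring
    · rcases a with _ | a
      · rcases hst with rfl | rfl | rfl
        · simp [fv_zero_left, fv_zero_right]; ring
        · obtain rfl : b = 0 := by omega
          simp [fv_zero_left, fv_zero_right]
        · omega
      · rcases b with _ | b
        · rcases hst with rfl | rfl | rfl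
          · omega
          · simp [fv_zero_mid, fv_zero_right]; ring
          · omega
        · have hr := fv_rec a b
          rcases hst with rfl | rfl | rfl
          · obtain rfl : a = 0 := by omega
            simp [fv_zero_left, fv_zero_right] at hr ⊢
            linear_combination (n.factorial : ℚ) * hr
          · obtain rfl : b = 0 := by omega
            simp [fv_zero_mid, fv_zero_right] at hr ⊢
            linear_combination (n.factorial : ℚ) * hr
          · simp
            linear_combination (n.factorial : ℚ) * hr

theorem countP_eq_sum (L : List (List ℕ)) (p : List ℕ → Bool) :
    ((L.countP p : ℕ) : ℚ) = (L.map fun d => if p d = true then (1 : ℚ) else 0).sum := by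
  induction L with
  | nil => simp
  | cons x xs ih =>
    rw [List.countP_cons, List.map_cons, List.sum_cons, ← ih]
    push_cast
    ring

/-- `g(q,k,1) = 1/(q+1) + 1/(k+1) - 1/(q+k+1)`. -/
theorem stmt12 (q k : ℕ) (hq : 1 ≤ q) (hk : 1 ≤ k) :
    gFull [q, k, 1]
      = 1 / ((q : ℚ) + 1) + 1 / ((k : ℚ) + 1) - 1 / ((q : ℚ) + k + 1) := by
  have hd : deckList [q, k, 1] = dk q k 1 := by
    simp [deckList, dk, List.range_succ]
  have hl : (dk q k 1).length = q + k + 1 := by simp [dk]; omega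
  have h := key q k (q + k + 1) q k 1 [] rfl le_rfl (by simp) (by simp) (by simp)
  unfold gFull g winProb
  rw [hd, hl, List.Perm.countP_eq _ (List.permutations_perm_permutations' (dk q k 1)),
    countP_eq_sum]
  unfold permSum at h
  rw [h, mul_div_cancel_left₀ _ (by positivity)]
  simp [fv]
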